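/- Let n ≥ 1 and 1 ≤ r ≤ n, and define F(A) = H_r(λ(A))^{1/r} for real symmetric n×n matrices A whose eigenvalue vector λ(A) lies in Γ_r. Then F is concave on this set: if A and B are symmetric with λ(A) ∈ Γ_r and λ(B) ∈ Γ_r, then λ((A+B)/2) ∈ Γ_r and F((A+B)/2) ≥ (F(A) + F(B))/2. -/

import Mathlib

/-!
The proof first treats vectors and then passes to symmetric matrices.

*Vectors.* Let `q_j = S_{j+1} / S_j`. On `Γ_{j+1}` the function `q_j` is superadditive
(`quotient_superadditive`). This is proved by induction on `j` from the identity
`(j + 2) q_{j+1}(z) = ∑ i, (z_i - z_i² / (z_i + q_j(z without z_i)))` (`quotient_identity`), since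
`a² / p` is subadditive in `(a, p)` and decreasing in `p > 0`. The induction requires that deleting
a variable maps `Γ_{r+1}` into `Γ_r` (`sesymm_erase_pos`), a consequence of Newton's inequality
`S_k S_{k+2} ≤ S_{k+1}²`, which in turn follows from Rolle's theorem and Laguerre's inequality.
As `S_r = q_0 ⋯ q_{r-1}`, the function `S_r^{1/r}` is a geometric mean of superadditive functions
up to a constant factor, hence superadditive by Minkowski's inequality. Being homogeneous of degree
one, it is concave on the convex cone `Γ_r` (`fcurv_concaveOn`).

*Matrices.* In an orthonormal eigenbasis of `(A + B) / 2`, the eigenvalues of `(A + B) / 2` are the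
averages of the diagonal entries of `A` and `B`. The diagonal of `A` is a doubly stochastic image of
`λ(A)` (`exists_doublyStochastic_diag`). By Birkhoff's theorem it is a convex combination of
permutations of `λ(A)`, so it lies in `Γ_r` and `f` is at least `f(λ(A))` there
(`fcurv_doublyStochastic`); likewise for `B`. Concavity of `f` on `Γ_r` concludes.
-/

/-- The `r`-th elementary symmetric function of `x : Fin n → ℝ`. -/
def esymm (n r : ℕ) (x : Fin n → ℝ) : ℝ :=
  ∑ s ∈ Finset.powersetCard r (Finset.univ : Finset (Fin n)), ∏ i ∈ s, x i

/-- The Gårding cone `Γ_r = {x ∈ ℝⁿ : S_j(x) > 0 for j = 1, …, r}`. -/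
def gardingCone (n r : ℕ) : Set (Fin n → ℝ) :=
  {x | ∀ j : ℕ, 1 ≤ j → j ≤ r → 0 < esymm n j x}

/-- The normalized curvature function `f(λ) = H_r(λ)^{1/r}`,
where `H_r(λ) = S_r(λ)/C(n,r)`. -/
noncomputable def fcurv (n r : ℕ) (x : Fin n → ℝ) : ℝ :=
  (esymm n r x / (n.choose r : ℝ)) ^ ((1 : ℝ) / r)

/-- The curvature operator `F(A) = H_r(λ(A))^{1/r}` on symmetric matrices, where
`λ(A)` is the eigenvalue vector of `A`. -/
noncomputable def Fmat (n r : ℕ) {A : Matrix (Fin n) (Fin n) ℝ}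
    (hA : A.IsHermitian) : ℝ :=
  fcurv n r hA.eigenvalues

/-! ### Newton's inequality -/

open Polynomial in
/-- Rolle's theorem: the derivative of a real-rooted polynomial is real-rooted. -/
theorem splits_derivative_real {p : ℝ[X]} (hp : p.Splits) : (derivative p).Splits := by
  rw [splits_iff_card_roots] at hp ⊢
  have h1 := card_roots_le_derivative p
  have h2 := natDegree_derivative_le p
  have h3 := card_roots' (derivative p)
  omega

open Polynomial in
/-- Laguerre's inequality `p p'' ≤ p' ^ 2` for a product of real linear factors. Adjoining a factor
`ℓ = X - a` to `q` turns `q' ^ 2 - q q''` into `q ^ 2 + ℓ ^ 2 (q' ^ 2 - q q'')`. -/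
theorem laguerre_ineq_multiset (m : Multiset ℝ) (t : ℝ) :
    (m.map fun a => X - C a).prod.eval t *
      (derivative (derivative (m.map fun a => X - C a).prod)).eval t
      ≤ ((derivative (m.map fun a => X - C a).prod).eval t) ^ 2 := by
  induction m using Multiset.induction_on with
  | empty => simp
  | cons a m ih =>
    simp only [Multiset.map_cons, Multiset.prod_cons]
    generalize (m.map fun a => X - C a).prod = q at ih ⊢
    simp only [derivative_mul, derivative_sub, derivative_X, derivative_C, sub_zero, one_mul,
      derivative_add, eval_mul, eval_add, eval_sub, eval_X, eval_C]
    nlinarith [sq_nonneg (q.eval t), mul_nonneg (sq_nonneg (t - a)) (sub_nonneg.2 ih)]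

open Polynomial in
theorem laguerre_ineq {p : ℝ[X]} (hp : p.Splits) (t : ℝ) :
    p.eval t * (derivative (derivative p)).eval t ≤ ((derivative p).eval t) ^ 2 := by
  rw [hp.eq_prod_roots]
  have h := laguerre_ineq_multiset p.roots t
  generalize (p.roots.map fun a => X - C a).prod = q at h ⊢
  simp only [derivative_C_mul, eval_mul, eval_C]
  nlinarith [mul_le_mul_of_nonneg_left h (sq_nonneg p.leadingCoeff)]

open Polynomial in
/-- Weak form of Newton's inequality: the coefficients of a real-rooted polynomial are log-concave.
It is Laguerre's inequality at `0` for the `k`-th derivative; this even gives the extra factor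
`(k + 2) / (k + 1)` on the left, which is dropped. -/
theorem coeff_log_concave {p : ℝ[X]} (hp : p.Splits) (k : ℕ) :
    p.coeff k * p.coeff (k + 2) ≤ p.coeff (k + 1) ^ 2 := by
  have hk : (derivative^[k] p).Splits := by
    induction k with
    | zero => simpa
    | succ k ih => rw [Function.iterate_succ_apply']; exact splits_derivative_real ih
  have h := laguerre_ineq hk 0
  rw [← Function.iterate_succ_apply' derivative, ← Function.iterate_succ_apply' derivative] at h
  simp only [← coeff_zero_eq_eval_zero, coeff_iterate_derivative, zero_add,
    Nat.descFactorial_self, nsmul_eq_mul, Nat.succ_eq_add_one, Nat.factorial_succ,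
    Nat.cast_mul] at h
  have hf : (0 : ℝ) < (k.factorial : ℝ) := by positivity
  push_cast at h
  rcases le_or_gt (p.coeff k * p.coeff (k + 2)) 0 with h0 | h0
  · exact h0.trans (sq_nonneg _)
  have h' : ((k.factorial : ℝ) ^ 2 * (k + 1)) * ((k + 2) * (p.coeff k * p.coeff (k + 2)))
      ≤ ((k.factorial : ℝ) ^ 2 * (k + 1)) * ((k + 1) * p.coeff (k + 1) ^ 2) := by
    have e : k + 1 + 1 = k + 2 := rfl
    rw [e] at h
    nlinarith [h]
  have h2 := le_of_mul_le_mul_left h' (by positivity)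
  have hk1 : (0 : ℝ) < k + 1 := by positivity
  nlinarith

/-! ### Elementary symmetric functions of a subset of the variables -/

/-- The `k`-th elementary symmetric function of the variables `x i`, `i ∈ s`. Letting the index set
vary makes it possible to delete a variable; `s = univ` recovers `esymm`. -/
def sesymm {ι : Type*} (s : Finset ι) (k : ℕ) (x : ι → ℝ) : ℝ :=
  ∑ t ∈ s.powersetCard k, ∏ i ∈ t, x i

section
variable {ι : Type*} [DecidableEq ι]

omit [DecidableEq ι] in
theorem sesymm_zero (s : Finset ι) (x : ι → ℝ) : sesymm s 0 x = 1 := by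
  simp [sesymm]

omit [DecidableEq ι] in
theorem sesymm_one (s : Finset ι) (x : ι → ℝ) : sesymm s 1 x = ∑ i ∈ s, x i := by
  simp [sesymm, Finset.powersetCard_one]

theorem sesymm_insert {s : Finset ι} {i : ι} (hi : i ∉ s) (k : ℕ) (x : ι → ℝ) :
    sesymm (insert i s) (k + 1) x = sesymm s (k + 1) x + x i * sesymm s k x := by
  unfold sesymm
  rw [Finset.powersetCard_succ_insert hi, Finset.sum_union, Finset.sum_image, Finset.mul_sum]
  · congr 1
    refine Finset.sum_congr rfl fun t ht => ?_
    rw [Finset.prod_insert fun h => hi ((Finset.mem_powersetCard.1 ht).1 h)]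
  · intro t ht u hu h
    have ht' : i ∉ t := fun h => hi ((Finset.mem_powersetCard.1 ht).1 h)
    have hu' : i ∉ u := fun h => hi ((Finset.mem_powersetCard.1 hu).1 h)
    rw [← Finset.erase_insert ht', h, Finset.erase_insert hu']
  · rw [Finset.disjoint_left]
    intro t ht ht2
    obtain ⟨u, -, rfl⟩ := Finset.mem_image.1 ht2
    exact hi ((Finset.mem_powersetCard.1 ht).1 (Finset.mem_insert_self _ _))

theorem sesymm_erase {s : Finset ι} {i : ι} (hi : i ∈ s) (k : ℕ) (x : ι → ℝ) :
    sesymm s (k + 1) x = sesymm (s.erase i) (k + 1) x + x i * sesymm (s.erase i) k x := by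
  rw [← sesymm_insert (Finset.notMem_erase i s), Finset.insert_erase hi]

/-- Euler's identity for the homogeneous polynomial `S_{k+1}`, since `∂S_{k+1}/∂x_i` is `S_k` of the
remaining variables. -/
theorem sesymm_euler (s : Finset ι) (k : ℕ) (x : ι → ℝ) :
    ((k : ℝ) + 1) * sesymm s (k + 1) x = ∑ i ∈ s, x i * sesymm (s.erase i) k x := by
  induction s using Finset.induction_on generalizing k with
  | empty =>
    have h : (∅ : Finset ι).powersetCard (k + 1) = ∅ :=
      Finset.powersetCard_eq_empty.2 (by simp)
    simp [sesymm, h]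
  | insert a s ha ih =>
    rw [Finset.sum_insert ha, Finset.erase_insert ha, sesymm_insert ha]
    cases k with
    | zero => simp [sesymm_zero, sesymm_one]; ring
    | succ k =>
      have : ∀ i ∈ s, x i * sesymm ((insert a s).erase i) (k + 1) x =
          x i * sesymm (s.erase i) (k + 1) x + x a * (x i * sesymm (s.erase i) k x) := by
        intro i hi
        have hia : a ≠ i := fun h => ha (h ▸ hi)
        rw [Finset.erase_insert_of_ne hia, sesymm_insert fun h => ha (Finset.mem_of_mem_erase h)]
        ring
      rw [Finset.sum_congr rfl this, Finset.sum_add_distrib, ← Finset.mul_sum, ← ih, ← ih]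
      push_cast
      ring

omit [DecidableEq ι] in
open Polynomial in
/-- Weak form of Newton's inequality, applied to the real-rooted polynomial `∏ (X + x_i)`. -/
theorem sesymm_log_concave (s : Finset ι) (k : ℕ) (x : ι → ℝ) :
    sesymm s k x * sesymm s (k + 2) x ≤ sesymm s (k + 1) x ^ 2 := by
  rcases le_or_gt (k + 2) s.card with hk | hk
  · have hs : (∏ i ∈ s, (X + C (x i))).Splits :=
      Splits.prod fun i _ => Splits.X_add_C _
    have h := coeff_log_concave hs (s.card - (k + 2))
    rw [Finset.prod_X_add_C_coeff s x (by omega), Finset.prod_X_add_C_coeff s x (by omega),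
      Finset.prod_X_add_C_coeff s x (by omega)] at h
    rw [show s.card - (s.card - (k + 2)) = k + 2 by omega,
      show s.card - (s.card - (k + 2) + 2) = k by omega,
      show s.card - (s.card - (k + 2) + 1) = k + 1 by omega] at h
    rw [mul_comm]
    exact h
  · have : sesymm s (k + 2) x = 0 := by
      simp [sesymm, Finset.powersetCard_eq_empty.2 hk]
    rw [this, mul_zero]
    exact sq_nonneg _

/-- Deleting a variable maps `Γ_{r+1}` into `Γ_r`. If `j + 1` were the first index at which positivity
fails for the remaining variables, then positivity of `S_{j+1}` and `S_{j+2}` for all variables would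
contradict Newton's inequality. -/
theorem sesymm_erase_pos {s : Finset ι} {x : ι → ℝ} {r : ℕ}
    (hx : ∀ j ≤ r + 1, 0 < sesymm s j x) {i : ι} (hi : i ∈ s) :
    ∀ j ≤ r, 0 < sesymm (s.erase i) j x := by
  intro j
  induction j with
  | zero => intro _; simp [sesymm_zero]
  | succ j ih =>
    intro hj
    have h0 := ih (by omega)
    have h1 := hx (j + 1) (by omega)
    have h2 := hx (j + 2) (by omega)
    rw [sesymm_erase hi] at h1 h2
    have hN := sesymm_log_concave (s.erase i) j x
    by_contra! hneg
    -- With `a > 0 ≥ b`, the bounds `b + x_i a > 0` and `c + x_i b > 0` give `a c > b ^ 2`.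
    generalize sesymm (s.erase i) (j + 1) x = b at *
    generalize sesymm (s.erase i) j x = a at *
    generalize sesymm (s.erase i) (j + 2) x = c at *
    nlinarith [mul_pos h0 h2, mul_nonneg (neg_nonneg.2 hneg) h1.le]

/-! ### Superadditivity of quotients of consecutive elementary symmetric functions -/

/-- The recursion for `q_r = S_{r+1} / S_r` that carries the induction: `(r + 2) q_{r+1}(z)` is the sum
over `i` of `z_i - z_i² / (z_i + q_r(z without z_i))`. -/
theorem quotient_identity {s : Finset ι} {z : ι → ℝ} {r : ℕ} (h1 : 0 < sesymm s (r + 1) z)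
    (h0 : ∀ i ∈ s, 0 < sesymm (s.erase i) r z) :
    ((r : ℝ) + 2) * (sesymm s (r + 2) z / sesymm s (r + 1) z) =
      ∑ i ∈ s, (z i - z i ^ 2 /
        (z i + sesymm (s.erase i) (r + 1) z / sesymm (s.erase i) r z)) := by
  have := sesymm_euler s (r + 1) z
  push_cast at this
  rw [show (r : ℝ) + 1 + 1 = r + 2 by ring] at this
  rw [← mul_div_assoc, this, Finset.sum_div]
  refine Finset.sum_congr rfl fun i hi => ?_
  have h := h0 i hi
  have e := sesymm_erase hi r z
  have e2 : z i + sesymm (s.erase i) (r + 1) z / sesymm (s.erase i) r z =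
      sesymm s (r + 1) z / sesymm (s.erase i) r z := by
    rw [e]; field_simp; ring
  rw [e2]
  have := h.ne'
  have := h1.ne'
  field_simp
  rw [e]
  ring

/-- Subadditivity of `(a, p) ↦ a ^ 2 / p`, which is also decreasing in `p > 0`. -/
theorem quad_over_linear {a b p q w : ℝ} (hp : 0 < p) (hq : 0 < q) (hw : p + q ≤ w) :
    (a + b) ^ 2 / w ≤ a ^ 2 / p + b ^ 2 / q := by
  refine (div_le_div_of_nonneg_left (sq_nonneg _) (by positivity) hw).trans ?_
  rw [div_add_div _ _ hp.ne' hq.ne', div_le_div_iff₀ (by positivity) (by positivity)]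
  nlinarith [mul_nonneg (mul_pos hp hq).le (sq_nonneg (a * q - b * p)),
    sq_nonneg (a * q - b * p)]

/-- Marcus–Lopes: `S_{r+1} / S_r` is superadditive on `Γ_{r+1}`. In `quotient_identity` each summand is
a linear term minus a quadratic over a term that is superadditive by induction. -/
theorem quotient_superadditive (r : ℕ) : ∀ (s : Finset ι) (x y : ι → ℝ),
    (∀ j ≤ r + 1, 0 < sesymm s j x) → (∀ j ≤ r + 1, 0 < sesymm s j y) →
    0 < sesymm s r (x + y) ∧
      sesymm s (r + 1) x / sesymm s r x + sesymm s (r + 1) y / sesymm s r y ≤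
        sesymm s (r + 1) (x + y) / sesymm s r (x + y) := by
  induction r with
  | zero =>
    intro s x y _ _
    simp [sesymm_zero, sesymm_one, Finset.sum_add_distrib]
  | succ r ih =>
    intro s x y hx hy
    have hs := ih s x y (fun j hj => hx j (by omega)) (fun j hj => hy j (by omega))
    have hpos : 0 < sesymm s (r + 1) (x + y) := by
      have h1 : 0 < sesymm s (r + 1) (x + y) / sesymm s r (x + y) :=
        lt_of_lt_of_le (add_pos (div_pos (hx _ (by omega)) (hx _ (by omega)))
          (div_pos (hy _ (by omega)) (hy _ (by omega)))) hs.2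
      exact (div_pos_iff_of_pos_right hs.1).1 h1
    refine ⟨hpos, ?_⟩
    have hxe := fun i hi => sesymm_erase_pos (i := i) hx hi
    have hye := fun i hi => sesymm_erase_pos (i := i) hy hi
    have hi := fun i hi => ih (s.erase i) x y (hxe i hi) (hye i hi)
    have ix := quotient_identity (hx (r + 1) (by omega)) fun i hi => hxe i hi r (by omega)
    have iy := quotient_identity (hy (r + 1) (by omega)) fun i hi => hye i hi r (by omega)
    have ixy := quotient_identity hpos fun i h => (hi i h).1
    refine le_of_mul_le_mul_left ?_ (by positivity : (0 : ℝ) < (r : ℝ) + 2)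
    rw [mul_add]
    rw [show r + 1 + 1 = r + 2 from rfl, ix, iy, ixy, ← Finset.sum_add_distrib]
    refine Finset.sum_le_sum fun i h => ?_
    have den : ∀ z : ι → ℝ, 0 < sesymm s (r + 1) z → 0 < sesymm (s.erase i) r z →
        0 < z i + sesymm (s.erase i) (r + 1) z / sesymm (s.erase i) r z := by
      intro z h1 h0
      rw [sesymm_erase h] at h1
      have : z i + sesymm (s.erase i) (r + 1) z / sesymm (s.erase i) r z =
        (sesymm (s.erase i) (r + 1) z + z i * sesymm (s.erase i) r z) /
          sesymm (s.erase i) r z := by field_simp; ring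
      rw [this]; positivity
    have := quad_over_linear (a := x i) (b := y i)
      (den x (hx _ (by omega)) (hxe i h r (by omega)))
      (den y (hy _ (by omega)) (hye i h r (by omega)))
      (w := (x + y) i +
        sesymm (s.erase i) (r + 1) (x + y) / sesymm (s.erase i) r (x + y))
      (by have := (hi i h).2; simp only [Pi.add_apply]; linarith)
    simp only [Pi.add_apply] at this ⊢
    linarith

/-- `Γ_r` is closed under addition. -/
theorem sesymm_add_pos {s : Finset ι} {x y : ι → ℝ} {r : ℕ}
    (hx : ∀ j ≤ r, 0 < sesymm s j x) (hy : ∀ j ≤ r, 0 < sesymm s j y) :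
    ∀ j ≤ r, 0 < sesymm s j (x + y) := by
  intro j hj
  cases j with
  | zero => simp [sesymm_zero]
  | succ j =>
    have h := quotient_superadditive j s x y (fun i hi => hx i (by omega))
      (fun i hi => hy i (by omega))
    exact (div_pos_iff_of_pos_right h.1).1 (lt_of_lt_of_le
      (add_pos (div_pos (hx _ (by omega)) (hx _ (by omega)))
          (div_pos (hy _ (by omega)) (hy _ (by omega)))) h.2)

omit [DecidableEq ι] in
theorem sesymm_eq_prod {s : Finset ι} {x : ι → ℝ} {r : ℕ} (hx : ∀ j ≤ r, 0 < sesymm s j x) :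
    sesymm s r x = ∏ j ∈ Finset.range r, sesymm s (j + 1) x / sesymm s j x := by
  induction r with
  | zero => simp [sesymm_zero]
  | succ r ih =>
    rw [Finset.prod_range_succ, ← ih fun j hj => hx j (by omega)]
    have := (hx r (by omega)).ne'
    field_simp

omit [DecidableEq ι] in
theorem sesymm_smul (s : Finset ι) (k : ℕ) (c : ℝ) (x : ι → ℝ) :
    sesymm s k (c • x) = c ^ k * sesymm s k x := by
  unfold sesymm
  rw [Finset.mul_sum]
  refine Finset.sum_congr rfl fun t ht => ?_
  simp [Finset.prod_mul_distrib, (Finset.mem_powersetCard.1 ht).2]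

end

/-! ### Concavity on the Gårding cone -/

/-- Minkowski's (Mahler's) inequality: the geometric mean is superadditive on positive families. -/
theorem geom_mean_superadditive {r : ℕ} (hr : 1 ≤ r) {a b : ℕ → ℝ}
    (ha : ∀ j ∈ Finset.range r, 0 < a j) (hb : ∀ j ∈ Finset.range r, 0 < b j) :
    (∏ j ∈ Finset.range r, a j) ^ ((1 : ℝ) / r) + (∏ j ∈ Finset.range r, b j) ^ ((1 : ℝ) / r) ≤
      (∏ j ∈ Finset.range r, (a j + b j)) ^ ((1 : ℝ) / r) := by
  have hr0 : (0 : ℝ) < r := by exact_mod_cast hr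
  -- AM-GM for the ratios `u j / (a j + b j)`; for `u = a` and `u = b` the two arithmetic means on
  -- the right add up to `1`.
  have key : ∀ u : ℕ → ℝ, (∀ j ∈ Finset.range r, 0 < u j) →
      (∏ j ∈ Finset.range r, u j) ^ ((1 : ℝ) / r) ≤
        (∏ j ∈ Finset.range r, (a j + b j)) ^ ((1 : ℝ) / r) *
        ∑ j ∈ Finset.range r, (1 / (r : ℝ)) * (u j / (a j + b j)) := by
    intro u hu
    have hab : ∀ j ∈ Finset.range r, 0 < a j + b j := fun j hj => add_pos (ha j hj) (hb j hj)
    have h := Real.geom_mean_le_arith_mean_weighted (Finset.range r) (fun _ => 1 / (r : ℝ))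
      (fun j => u j / (a j + b j)) (fun _ _ => by positivity)
      (by simp; field_simp) (fun j hj => (div_pos (hu j hj) (hab j hj)).le)
    rw [Real.finsetProd_rpow _ _ fun j hj => (div_pos (hu j hj) (hab j hj)).le,
      Finset.prod_div_distrib, Real.div_rpow (Finset.prod_nonneg fun j hj => (hu j hj).le)
      (Finset.prod_nonneg fun j hj => (hab j hj).le)] at h
    have hp : 0 < (∏ j ∈ Finset.range r, (a j + b j)) ^ ((1 : ℝ) / r) :=
      Real.rpow_pos_of_pos (Finset.prod_pos hab) _
    rw [div_le_iff₀ hp] at h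
    linarith
  refine (add_le_add (key a ha) (key b hb)).trans_eq ?_
  rw [← mul_add, ← Finset.sum_add_distrib]
  have : ∀ j ∈ Finset.range r, (1 / (r : ℝ)) * (a j / (a j + b j)) +
      (1 / (r : ℝ)) * (b j / (a j + b j)) = 1 / r := by
    intro j hj
    have := add_pos (ha j hj) (hb j hj)
    field_simp
  rw [Finset.sum_congr rfl this]
  simp
  field_simp

theorem mem_gardingCone_iff {n r : ℕ} {x : Fin n → ℝ} :
    x ∈ gardingCone n r ↔ ∀ j ≤ r, 0 < sesymm Finset.univ j x := by
  constructor
  · intro h j hj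
    cases j with
    | zero => simp [sesymm_zero]
    | succ j => exact h (j + 1) (by omega) hj
  · exact fun h j _ hj => h j hj

theorem add_mem_gardingCone {n r : ℕ} {x y : Fin n → ℝ} (hx : x ∈ gardingCone n r)
    (hy : y ∈ gardingCone n r) : x + y ∈ gardingCone n r := by
  rw [mem_gardingCone_iff] at *
  exact sesymm_add_pos hx hy

theorem smul_mem_gardingCone {n r : ℕ} {x : Fin n → ℝ} (hx : x ∈ gardingCone n r) {c : ℝ}
    (hc : 0 < c) : c • x ∈ gardingCone n r := by
  rw [mem_gardingCone_iff] at *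
  intro j hj
  rw [sesymm_smul]
  exact mul_pos (pow_pos hc _) (hx j hj)

theorem fcurv_smul {n r : ℕ} (hr : 1 ≤ r) {x : Fin n → ℝ} (hx : x ∈ gardingCone n r) {c : ℝ}
    (hc : 0 < c) : fcurv n r (c • x) = c * fcurv n r x := by
  have h : esymm n r (c • x) = c ^ r * esymm n r x := sesymm_smul _ _ _ _
  have hpos : 0 < esymm n r x := hx r hr le_rfl
  unfold fcurv
  rw [h, mul_div_assoc, Real.mul_rpow (by positivity) (by positivity), one_div,
    Real.pow_rpow_inv_natCast hc.le (by omega)]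

/-- Up to a constant, `S_r^{1/r}` is the geometric mean of the superadditive quotients `S_{j+1} / S_j`. -/
theorem fcurv_add {n r : ℕ} (hr : 1 ≤ r) {x y : Fin n → ℝ} (hx : x ∈ gardingCone n r)
    (hy : y ∈ gardingCone n r) : fcurv n r x + fcurv n r y ≤ fcurv n r (x + y) := by
  have hxy := add_mem_gardingCone hx hy
  have px : 0 < esymm n r x := hx r hr le_rfl
  have py : 0 < esymm n r y := hy r hr le_rfl
  have pxy : 0 < esymm n r (x + y) := hxy r hr le_rfl
  unfold fcurv
  rw [Real.div_rpow px.le (by positivity), Real.div_rpow py.le (by positivity),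
    Real.div_rpow pxy.le (by positivity), ← add_div]
  refine div_le_div_of_nonneg_right ?_ (by positivity)
  rw [mem_gardingCone_iff] at hx hy hxy
  have qpos : ∀ {z : Fin n → ℝ}, (∀ j ≤ r, 0 < sesymm Finset.univ j z) →
      ∀ j ∈ Finset.range r, 0 < sesymm Finset.univ (j + 1) z / sesymm Finset.univ j z := by
    intro z hz j hj
    have := Finset.mem_range.1 hj
    exact div_pos (hz _ (by omega)) (hz _ (by omega))
  change sesymm Finset.univ r x ^ _ + sesymm Finset.univ r y ^ _ ≤
    sesymm Finset.univ r (x + y) ^ _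
  rw [sesymm_eq_prod hx, sesymm_eq_prod hy, sesymm_eq_prod hxy]
  refine (geom_mean_superadditive hr (qpos hx) (qpos hy)).trans ?_
  refine Real.rpow_le_rpow (Finset.prod_nonneg fun j hj =>
    (add_pos (qpos hx j hj) (qpos hy j hj)).le) ?_ (by positivity)
  refine Finset.prod_le_prod (fun j hj => (add_pos (qpos hx j hj) (qpos hy j hj)).le) ?_
  intro j hj
  have := Finset.mem_range.1 hj
  exact (quotient_superadditive j _ x y (fun i hi => hx i (by omega))
    (fun i hi => hy i (by omega))).2

theorem fcurv_concaveOn {n r : ℕ} (hr : 1 ≤ r) :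
    ConcaveOn ℝ (gardingCone n r) (fcurv n r) := by
  rw [concaveOn_iff_forall_pos]
  constructor
  · rw [convex_iff_forall_pos]
    intro x hx y hy a b ha hb _
    exact add_mem_gardingCone (smul_mem_gardingCone hx ha) (smul_mem_gardingCone hy hb)
  · intro x hx y hy a b ha hb _
    have := fcurv_add hr (smul_mem_gardingCone hx ha) (smul_mem_gardingCone hy hb)
    rwa [fcurv_smul hr hx ha, fcurv_smul hr hy hb] at this

/-! ### From vectors to symmetric matrices -/

theorem esymm_comp_perm {n : ℕ} (r : ℕ) (x : Fin n → ℝ) (σ : Equiv.Perm (Fin n)) :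
    esymm n r (x ∘ σ) = esymm n r x := by
  unfold esymm
  rw [← Finset.esymm_map_val, ← Finset.esymm_map_val, ← Multiset.map_map]
  congr 2
  simp

/-- By Birkhoff's theorem `M x` is a convex combination of permutations of `x`. These lie in the convex
set `{v ∈ Γ_r : f(v) ≥ f(x)}`, because `f` is concave and symmetric. -/
theorem fcurv_doublyStochastic {n r : ℕ} (hr : 1 ≤ r) {x : Fin n → ℝ}
    (hx : x ∈ gardingCone n r) {M : Matrix (Fin n) (Fin n) ℝ}
    (hM : M ∈ doublyStochastic ℝ (Fin n)) :
    M.mulVec x ∈ gardingCone n r ∧ fcurv n r x ≤ fcurv n r (M.mulVec x) := by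
  have hL : Convex ℝ {v | v ∈ gardingCone n r ∧ fcurv n r x ≤ fcurv n r v} :=
    (fcurv_concaveOn hr).convex_ge _
  have hL' := hL.linear_preimage ((Matrix.mulVecBilin ℝ ℝ).flip x)
  rw [← SetLike.mem_coe, doublyStochastic_eq_convexHull_permMatrix] at hM
  refine convexHull_min ?_ hL' hM
  rintro _ ⟨σ, rfl⟩
  have hp : ∀ j, esymm n j ((σ.permMatrix ℝ).mulVec x) = esymm n j x := by
    intro j
    rw [Matrix.permMatrix_mulVec]
    exact esymm_comp_perm j x σ
  refine ⟨fun j h1 h2 => ?_, le_of_eq ?_⟩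
  · exact (hp j).symm ▸ hx j h1 h2
  · change _ = fcurv n r ((σ.permMatrix ℝ).mulVec x)
    rw [fcurv, fcurv, hp]

open Matrix in
/-- The squared entries of an orthogonal matrix form a doubly stochastic matrix. -/
theorem sq_entries_doublyStochastic {n : ℕ} (W : unitaryGroup (Fin n) ℝ) :
    (Matrix.of fun i j => (W : Matrix (Fin n) (Fin n) ℝ) i j ^ 2) ∈
      doublyStochastic ℝ (Fin n) := by
  rw [mem_doublyStochastic_iff_sum]
  refine ⟨fun i j => sq_nonneg _, fun i => ?_, fun j => ?_⟩
  · have := congrFun (congrFun (Matrix.mem_unitaryGroup_iff.1 W.2) i) i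
    simpa [Matrix.mul_apply, sq] using this
  · have := congrFun (congrFun (Matrix.mem_unitaryGroup_iff'.1 W.2) j) j
    simpa [Matrix.mul_apply, sq] using this

open Matrix in
/-- Schur: in any orthonormal basis, the diagonal of a symmetric matrix is the image of its eigenvalue
vector under a doubly stochastic matrix. -/
theorem exists_doublyStochastic_diag {n : ℕ} {A : Matrix (Fin n) (Fin n) ℝ}
    (hA : A.IsHermitian) (U : unitaryGroup (Fin n) ℝ) :
    ∃ M ∈ doublyStochastic ℝ (Fin n),
      (fun i => (star (U : Matrix (Fin n) (Fin n) ℝ) * A * U) i i) = M *ᵥ hA.eigenvalues := by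
  refine ⟨_, sq_entries_doublyStochastic (star U * hA.eigenvectorUnitary), ?_⟩
  set W : unitaryGroup (Fin n) ℝ := star U * hA.eigenvectorUnitary with hW
  have h : star (U : Matrix (Fin n) (Fin n) ℝ) * A * U =
      W * diagonal hA.eigenvalues * star (W : Matrix (Fin n) (Fin n) ℝ) := by
    have hs := hA.spectral_theorem
    rw [Unitary.conjStarAlgAut_apply] at hs
    conv_lhs => rw [hs]
    simp [hW, Matrix.mul_assoc]
  ext i
  rw [h, Matrix.mul_apply]
  simp only [Matrix.mul_diagonal, Matrix.mulVec, dotProduct, Matrix.of_apply, Matrix.star_apply,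
    star_trivial]
  exact Finset.sum_congr rfl fun j _ => by ring

/-- `F(A) = H_r(λ(A))^{1/r}` is concave on the set of symmetric matrices with
eigenvalues in `Γ_r`: if `λ(A), λ(B) ∈ Γ_r`, then `(A+B)/2` is symmetric with
`λ((A+B)/2) ∈ Γ_r` and `F((A+B)/2) ≥ (F(A) + F(B))/2`. -/
theorem Fmat_midpoint_concave (n r : ℕ) (hn : 1 ≤ n) (hr1 : 1 ≤ r) (hrn : r ≤ n)
    (A B : Matrix (Fin n) (Fin n) ℝ) (hA : A.IsHermitian) (hB : B.IsHermitian)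
    (hAe : hA.eigenvalues ∈ gardingCone n r) (hBe : hB.eigenvalues ∈ gardingCone n r) :
    ∃ hC : ((1 / 2 : ℝ) • (A + B)).IsHermitian,
      hC.eigenvalues ∈ gardingCone n r ∧
      (Fmat n r hA + Fmat n r hB) / 2 ≤ Fmat n r hC := by
  have hC : ((1 / 2 : ℝ) • (A + B)).IsHermitian := by
    have := hA.add hB
    unfold Matrix.IsHermitian at *
    rw [Matrix.conjTranspose_smul, this, star_trivial]
  refine ⟨hC, ?_⟩
  -- In an eigenbasis of `(A + B) / 2`, its eigenvalues are the averages of the diagonals of `A` and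
  -- `B`, to which Schur's lemma applies.
  set U := hC.eigenvectorUnitary with hU
  obtain ⟨M, hM, hMA⟩ := exists_doublyStochastic_diag hA U
  obtain ⟨N, hN, hNB⟩ := exists_doublyStochastic_diag hB U
  have hev : hC.eigenvalues =
      (1 / 2 : ℝ) • (M.mulVec hA.eigenvalues) + (1 / 2 : ℝ) • (N.mulVec hB.eigenvalues) := by
    have hd := hC.conjStarAlgAut_star_eigenvectorUnitary
    rw [Unitary.conjStarAlgAut_star_apply, ← hU] at hd
    rw [← hMA, ← hNB]
    ext i
    have := congrFun (congrFun hd i) i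
    rw [Matrix.diagonal_apply_eq] at this
    simp only [Function.comp_apply, RCLike.ofReal_real_eq_id, id] at this
    rw [← this]
    simp [Matrix.mul_add, Matrix.add_mul]
  have h1 := fcurv_doublyStochastic hr1 hAe hM
  have h2 := fcurv_doublyStochastic hr1 hBe hN
  have hc := fcurv_concaveOn (n := n) hr1
  unfold Fmat
  rw [hev]
  refine ⟨hc.1 h1.1 h2.1 (by norm_num) (by norm_num) (by norm_num), ?_⟩
  have h3 := hc.2 h1.1 h2.1 (show (0 : ℝ) ≤ 1 / 2 by norm_num)
    (show (0 : ℝ) ≤ 1 / 2 by norm_num) (by norm_num)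
  simp only [smul_eq_mul] at h3
  linarith [h1.2, h2.2]
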